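/- Let ℓ ≥ 1, let 0 ≤ ε ≤ 1/2, and let ρ_{S_A S_B E} = Σ_{s_A, s_B ∈ {0,1}^ℓ} P(s_A, s_B) |s_A⟩⟨s_A| ⊗ |s_B⟩⟨s_B| ⊗ ρ_E^{s_A, s_B} be a ccq-state describing a key pair (S_A, S_B) together with an adversary's quantum system E. Suppose the key is ε-secure, i.e., δ(ρ_{S_A S_B E}, Σ_{s∈{0,1}^ℓ} 2^{−ℓ} |s⟩⟨s| ⊗ |s⟩⟨s| ⊗ ρ_E) ≤ ε, where ρ_E is the reduced state of ρ_{S_A S_B E} on E. Then M(S_A; S_B; E) ≥ (1 − ε − 2h(ε) − √(2ε))·ℓ − 1/e, where h is the binary entropy function. -/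

import Mathlib

open scoped Matrix Kronecker BigOperators ComplexOrder
open Matrix

noncomputable section

/-- The outer product `|v⟩⟨v|` of a vector. -/
def outerPr {n : Type*} (v : n → ℂ) : Matrix n n ℂ :=
  Matrix.of fun i j => v i * star (v j)

/-- A density operator: positive semidefinite with trace one. -/
def IsDensity {n : Type*} [Fintype n] [DecidableEq n] (ρ : Matrix n n ℂ) : Prop :=
  ρ.PosSemidef ∧ ρ.trace = 1

/-- The eigenvalues of a matrix (as a real vector), `0` if the matrix is not Hermitian. -/
def eigs {n : Type*} [Fintype n] [DecidableEq n] (ρ : Matrix n n ℂ) : n → ℝ :=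
  if h : ρ.IsHermitian then h.eigenvalues else 0

/-- Trace distance `δ(ρ,σ) = (1/2) tr|ρ-σ|`. -/
def traceDist {n : Type*} [Fintype n] [DecidableEq n] (ρ σ : Matrix n n ℂ) : ℝ :=
  (1 / 2) * ∑ i, |eigs (ρ - σ) i|

/-- Von Neumann entropy (base 2). -/
def vnEntropy {n : Type*} [Fintype n] [DecidableEq n] (ρ : Matrix n n ℂ) : ℝ :=
  ∑ i, -(eigs ρ i * Real.logb 2 (eigs ρ i))

/-- Partial trace over the second (right) tensor factor. -/
def ptraceR {m w : Type*} [Fintype w] (M : Matrix (m × w) (m × w) ℂ) : Matrix m m ℂ :=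
  Matrix.of fun i j => ∑ k, M (i, k) (j, k)

/-- Partial trace over the first (left) tensor factor. -/
def ptraceL {m w : Type*} [Fintype m] (M : Matrix (m × w) (m × w) ℂ) : Matrix w w ℂ :=
  Matrix.of fun i j => ∑ k, M (k, i) (k, j)

/-- `ψ` is a purification of `ρ`: a unit vector on `d × w` whose partial trace over `w`
equals `ρ`. -/
def IsPurification {d w : Type*} [Fintype d] [Fintype w]
    (ψ : d × w → ℂ) (ρ : Matrix d d ℂ) : Prop :=
  (∑ i, Complex.normSq (ψ i)) = 1 ∧ ptraceR (outerPr ψ) = ρ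

/-- ε-smooth Rényi entropy of order 0 of a distribution. -/
def H0smooth {X : Type*} [Fintype X] (P : X → ℝ) (ε : ℝ) : ℝ :=
  sInf { r : ℝ | ∃ Q : X → ℝ, (∀ x, 0 ≤ Q x) ∧ (∑ x, |P x - Q x|) ≤ ε ∧
    r = Real.logb 2 (Nat.card {x : X // Q x ≠ 0}) }

/-- ε-smooth Rényi entropy of order 2 of a distribution. -/
def H2smooth {X : Type*} [Fintype X] (P : X → ℝ) (ε : ℝ) : ℝ :=
  sSup { r : ℝ | ∃ Q : X → ℝ, (∀ x, 0 ≤ Q x) ∧ (∑ x, |P x - Q x|) ≤ ε ∧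
    r = -Real.logb 2 (∑ x, Q x ^ 2) }

/-- ε-smooth Rényi entropy of order 0 of a density operator (entropy of its eigenvalues). -/
def S0smooth {n : Type*} [Fintype n] [DecidableEq n] (ρ : Matrix n n ℂ) (ε : ℝ) : ℝ :=
  H0smooth (eigs ρ) ε

/-- ε-smooth Rényi entropy of order 2 of a density operator (entropy of its eigenvalues). -/
def S2smooth {n : Type*} [Fintype n] [DecidableEq n] (ρ : Matrix n n ℂ) (ε : ℝ) : ℝ :=
  H2smooth (eigs ρ) ε

/-- Standard basis vector `|y⟩`. -/
def stdb {Y : Type*} [DecidableEq Y] (y : Y) : Y → ℂ := fun y' => if y' = y then 1 else 0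

/-- `n`-fold tensor (Kronecker) product of matrices, one per site. -/
def tpow {n : ℕ} {a b : Type*} (M : Fin n → Matrix a b ℂ) :
    Matrix (Fin n → a) (Fin n → b) ℂ :=
  Matrix.of fun p q => ∏ i, M i (p i) (q i)

/-- `n`-fold tensor product of vectors, one per site. -/
def vpow {n : ℕ} {a : Type*} (v : Fin n → a → ℂ) : (Fin n → a) → ℂ :=
  fun p => ∏ i, v i (p i)

/-- The unitary `U_π` permuting the `n` tensor factors. -/
def permMat {n : ℕ} {a : Type*} [DecidableEq a] (π : Equiv.Perm (Fin n)) :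
    Matrix (Fin n → a) (Fin n → a) ℂ :=
  Matrix.of fun p q => if q = p ∘ π then 1 else 0

/-- Shannon entropy (base 2) of a distribution. -/
def shEnt {X : Type*} [Fintype X] (P : X → ℝ) : ℝ :=
  ∑ x, -(P x * Real.logb 2 (P x))

/-- The binary entropy function. -/
def binEnt (ε : ℝ) : ℝ := -(ε * Real.logb 2 ε) - (1 - ε) * Real.logb 2 (1 - ε)

/-- The quantity `M(X;Y;E)` of a ccq-state: the supremum over all families of density
operators `σ_U^x`, `σ_V^x` of `S(U|VE) - S(U|VY)`. -/
def Mmeas {X Y E : Type*} [Fintype X] [Fintype Y] [Fintype E] [DecidableEq Y] [DecidableEq E]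
    (P : X → Y → ℝ) (σE : X → Y → Matrix E E ℂ) : ℝ :=
  sSup { r : ℝ | ∃ (dU dV : ℕ) (σU : X → Matrix (Fin dU) (Fin dU) ℂ)
      (σV : X → Matrix (Fin dV) (Fin dV) ℂ),
      (∀ x, IsDensity (σU x)) ∧ (∀ x, IsDensity (σV x)) ∧
      r = (vnEntropy (∑ x, ∑ y, P x y • (σU x ⊗ₖ (σV x ⊗ₖ σE x y)))
            - vnEntropy (∑ x, ∑ y, P x y • (σV x ⊗ₖ σE x y)))
        - (vnEntropy (∑ x, ∑ y, P x y • (σU x ⊗ₖ (σV x ⊗ₖ outerPr (stdb y))))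
            - vnEntropy (∑ x, ∑ y, P x y • (σV x ⊗ₖ outerPr (stdb y)))) }

/-- The entropy summand `-x log₂ x`. -/
def negMulLogb (x : ℝ) : ℝ := -(x * Real.logb 2 x)

theorem negMulLogb_eq (x : ℝ) : negMulLogb x = (Real.log 2)⁻¹ * Real.negMulLog x := by
  simp only [negMulLogb, Real.negMulLog, Real.logb]
  ring

theorem negMulLogb_zero : negMulLogb 0 = 0 := by simp [negMulLogb]

theorem negMulLogb_one : negMulLogb 1 = 0 := by simp [negMulLogb]

theorem negMulLogb_mul (x y : ℝ) :
    negMulLogb (x * y) = y * negMulLogb x + x * negMulLogb y := by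
  simp only [negMulLogb_eq, Real.negMulLog_mul]
  ring

theorem concaveOn_negMulLogb : ConcaveOn ℝ (Set.Ici 0) negMulLogb := by
  have h : negMulLogb = fun x => (Real.log 2)⁻¹ • Real.negMulLog x := by
    funext x
    simp [negMulLogb_eq]
  rw [h]
  exact Real.concaveOn_negMulLog.smul (by positivity)

section Entropy

variable {m n k ι : Type*} [Fintype m] [DecidableEq m] [Fintype n] [DecidableEq n]
  [Fintype k] [DecidableEq k] [Fintype ι]

theorem vnEntropy_eq_sum (A : Matrix n n ℂ) : vnEntropy A = ∑ i, negMulLogb (eigs A i) := rfl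

theorem vnEntropy_eq_roots {A : Matrix n n ℂ} (hA : A.IsHermitian) :
    vnEntropy A = (A.charpoly.roots.map fun z : ℂ => negMulLogb z.re).sum := by
  rw [hA.roots_charpoly_eq_eigenvalues, vnEntropy_eq_sum]
  simp [eigs, hA]

/-- Appending zero roots does not change the entropy sum. -/
theorem sum_roots_X_pow_mul (p : Polynomial ℂ) (hp : p ≠ 0) (j : ℕ) :
    ((Polynomial.X ^ j * p).roots.map fun z : ℂ => negMulLogb z.re).sum =
      (p.roots.map fun z : ℂ => negMulLogb z.re).sum := by
  rw [Polynomial.roots_mul (mul_ne_zero (pow_ne_zero _ Polynomial.X_ne_zero) hp)]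
  simp [Multiset.map_nsmul, Multiset.sum_nsmul, negMulLogb_zero]

theorem sum_roots_charpoly_mul_comm (A : Matrix m n ℂ) (B : Matrix n m ℂ) :
    ((A * B).charpoly.roots.map fun z : ℂ => negMulLogb z.re).sum =
      ((B * A).charpoly.roots.map fun z : ℂ => negMulLogb z.re).sum := by
  rw [← sum_roots_X_pow_mul _ (Matrix.charpoly_monic _).ne_zero (Fintype.card n),
    Matrix.charpoly_mul_comm', sum_roots_X_pow_mul _ (Matrix.charpoly_monic _).ne_zero]

theorem vnEntropy_mul_conjTranspose (V : Matrix m n ℂ) :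
    vnEntropy (V * Vᴴ) = vnEntropy (Vᴴ * V) := by
  rw [vnEntropy_eq_roots (isHermitian_mul_conjTranspose_self V),
    vnEntropy_eq_roots (isHermitian_conjTranspose_mul_self V), sum_roots_charpoly_mul_comm]

theorem isHermitian_mul_diagonal_mul {n : Type*} (U : Matrix n k ℂ) (d : k → ℝ) :
    (U * diagonal (fun i => (d i : ℂ)) * Uᴴ).IsHermitian := by
  refine isHermitian_mul_mul_conjTranspose U ?_
  exact isHermitian_diagonal_of_self_adjoint _ (by ext i; simp)

theorem vnEntropy_of_isometry {A : Matrix n n ℂ} {U : Matrix n k ℂ} {d : k → ℝ}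
    (hU : Uᴴ * U = 1) (hA : A = U * diagonal (fun i => (d i : ℂ)) * Uᴴ) :
    vnEntropy A = ∑ i, negMulLogb (d i) := by
  rw [hA, vnEntropy_eq_roots (isHermitian_mul_diagonal_mul U d), Matrix.mul_assoc,
    sum_roots_charpoly_mul_comm, Matrix.mul_assoc, hU, Matrix.mul_one, charpoly_diagonal,
    Polynomial.roots_prod]
  · simp
  · simp [Finset.prod_ne_zero_iff, Polynomial.X_sub_C_ne_zero]

theorem exists_spectral {A : Matrix n n ℂ} (hA : A.IsHermitian) :
    ∃ U : Matrix n n ℂ, Uᴴ * U = 1 ∧ U * Uᴴ = 1 ∧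
      A = U * diagonal (fun i => (eigs A i : ℂ)) * Uᴴ := by
  refine ⟨hA.eigenvectorUnitary, ?_, ?_, ?_⟩
  · exact Unitary.coe_star_mul_self hA.eigenvectorUnitary
  · exact Unitary.coe_mul_star_self hA.eigenvectorUnitary
  · have h := hA.spectral_theorem
    rw [Unitary.conjStarAlgAut_apply] at h
    simp only [eigs, hA, dif_pos]
    exact h

theorem eigs_nonneg {A : Matrix n n ℂ} (hA : A.PosSemidef) (i : n) : 0 ≤ eigs A i := by
  simp only [eigs, hA.isHermitian, dif_pos]
  exact hA.eigenvalues_nonneg i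

theorem sum_eigs {A : Matrix n n ℂ} (hA : A.IsHermitian) : ∑ i, eigs A i = A.trace.re := by
  rw [hA.trace_eq_sum_eigenvalues]
  simp [eigs, hA]

theorem mul_diagonal_mul_conjTranspose_apply {n : Type*} (U : Matrix n k ℂ) (d : k → ℝ) (i j : n) :
    (U * diagonal (fun i => (d i : ℂ)) * Uᴴ) i j = ∑ t, d t * (U i t * star (U j t)) := by
  rw [Matrix.mul_apply]
  refine Finset.sum_congr rfl fun t _ => ?_
  rw [mul_diagonal, conjTranspose_apply]
  ring

theorem vnEntropy_diagonal (d : n → ℝ) :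
    vnEntropy (diagonal fun i => (d i : ℂ)) = ∑ i, negMulLogb (d i) :=
  vnEntropy_of_isometry (U := (1 : Matrix n n ℂ)) (by simp) (by simp)

theorem sum_normSq_row {U : Matrix n n ℂ} (hU : U * Uᴴ = 1) (i : n) :
    ∑ t, Complex.normSq (U i t) = 1 := by
  have h := congrFun (congrFun hU i) i
  rw [Matrix.mul_apply] at h
  have h' := congrArg Complex.re h
  simpa [conjTranspose_apply, Complex.normSq_apply] using h'

theorem sum_normSq_col {U : Matrix n n ℂ} (hU : Uᴴ * U = 1) (t : n) :
    ∑ i, Complex.normSq (U i t) = 1 := by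
  have h := congrFun (congrFun hU t) t
  rw [Matrix.mul_apply] at h
  have h' := congrArg Complex.re h
  simpa [conjTranspose_apply, Complex.normSq_apply] using h'

/-- The entropy is at most the Shannon entropy of the diagonal. -/
theorem vnEntropy_le_diag {A : Matrix n n ℂ} (hA : A.PosSemidef) :
    vnEntropy A ≤ ∑ i, negMulLogb (A i i).re := by
  obtain ⟨U, h1, h2, h3⟩ := exists_spectral hA.isHermitian
  have hd : ∀ i, (A i i).re = ∑ t, Complex.normSq (U i t) • eigs A t := by
    intro i
    conv_lhs => rw [h3, mul_diagonal_mul_conjTranspose_apply]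
    rw [Complex.re_sum]
    refine Finset.sum_congr rfl fun t _ => ?_
    rw [Complex.star_def, Complex.mul_conj, Complex.re_ofReal_mul, Complex.ofReal_re, smul_eq_mul]
    ring
  have hj : ∀ i, ∑ t, Complex.normSq (U i t) • negMulLogb (eigs A t) ≤ negMulLogb (A i i).re := by
    intro i
    rw [hd]
    exact concaveOn_negMulLogb.le_map_sum (fun t _ => Complex.normSq_nonneg _)
      (sum_normSq_row h2 i) (fun t _ => eigs_nonneg hA t)
  refine le_trans (le_of_eq ?_) (Finset.sum_le_sum fun i _ => hj i)
  rw [Finset.sum_comm, vnEntropy_eq_sum]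
  refine Finset.sum_congr rfl fun t _ => ?_
  simp_rw [smul_eq_mul]
  rw [← Finset.sum_mul, sum_normSq_col h1, one_mul]

theorem vnEntropy_conj_unitary {A U : Matrix n n ℂ} (hA : A.IsHermitian) (h2 : U * Uᴴ = 1) :
    vnEntropy (Uᴴ * A * U) = vnEntropy A := by
  obtain ⟨W, w1, w2, w3⟩ := exists_spectral hA
  refine vnEntropy_of_isometry (U := Uᴴ * W) (d := eigs A) ?_ ?_
  · rw [conjTranspose_mul, conjTranspose_conjTranspose, Matrix.mul_assoc, ← Matrix.mul_assoc U,
      h2, Matrix.one_mul, w1]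
  · conv_lhs => rw [w3]
    simp only [conjTranspose_mul, conjTranspose_conjTranspose, Matrix.mul_assoc]

/-- Concavity of the von Neumann entropy. -/
theorem le_vnEntropy_sum_smul {A : ι → Matrix n n ℂ} (hA : ∀ i, (A i).PosSemidef)
    {p : ι → ℝ} (hp : ∀ i, 0 ≤ p i) (hp1 : ∑ i, p i = 1) :
    ∑ i, p i * vnEntropy (A i) ≤ vnEntropy (∑ i, p i • A i) := by
  have hC : (∑ i, p i • A i).PosSemidef :=
    posSemidef_sum _ fun i _ => (hA i).smul (hp i)
  obtain ⟨U, h1, h2, h3⟩ := exists_spectral hC.isHermitian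
  have hdiag : ∀ t, eigs (∑ i, p i • A i) t = ∑ i, p i • ((Uᴴ * A i * U) t t).re := by
    intro t
    have h4 : Uᴴ * (∑ i, p i • A i) * U =
        diagonal (fun s => (eigs (∑ i, p i • A i) s : ℂ)) := by
      conv_lhs => rw [h3]
      calc _ = (Uᴴ * U) * diagonal (fun s => (eigs (∑ i, p i • A i) s : ℂ)) * (Uᴴ * U) := by
            simp only [Matrix.mul_assoc]
        _ = _ := by rw [h1, Matrix.one_mul, Matrix.mul_one]
    have h5 := congrArg Complex.re (congrFun (congrFun h4 t) t)
    rw [diagonal_apply_eq, Complex.ofReal_re] at h5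
    rw [← h5, Matrix.mul_sum, Matrix.sum_mul, Matrix.sum_apply, Complex.re_sum]
    refine Finset.sum_congr rfl fun i _ => ?_
    simp
  have hU : ∀ i, (Uᴴ * A i * U).PosSemidef := fun i => (hA i).conjTranspose_mul_mul_same U
  calc ∑ i, p i * vnEntropy (A i)
      ≤ ∑ i, p i * ∑ t, negMulLogb ((Uᴴ * A i * U) t t).re := by
        refine Finset.sum_le_sum fun i _ => mul_le_mul_of_nonneg_left ?_ (hp i)
        rw [← vnEntropy_conj_unitary (hA i).isHermitian h2]
        exact vnEntropy_le_diag (hU i)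
    _ = ∑ t, ∑ i, p i • negMulLogb ((Uᴴ * A i * U) t t).re := by
        simp_rw [Finset.mul_sum]
        rw [Finset.sum_comm]
        simp
    _ ≤ ∑ t, negMulLogb (∑ i, p i • ((Uᴴ * A i * U) t t).re) := by
        refine Finset.sum_le_sum fun t _ => ?_
        exact concaveOn_negMulLogb.le_map_sum (fun i _ => hp i) hp1
          (fun i _ => (Complex.nonneg_iff.mp (hU i).diag_nonneg).1)
    _ = vnEntropy (∑ i, p i • A i) := by
        rw [vnEntropy_eq_sum]
        simp_rw [hdiag]

/-- Subadditivity of the von Neumann entropy under sums of positive semidefinite matrices. -/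
theorem vnEntropy_sum_le {A : ι → Matrix n n ℂ} (hA : ∀ i, (A i).PosSemidef) :
    vnEntropy (∑ i, A i) ≤ ∑ i, vnEntropy (A i) := by
  classical
  choose U h1 h2 h3 using fun i => exists_spectral (hA i).isHermitian
  let V : Matrix n (ι × n) ℂ :=
    Matrix.of fun a q => U q.1 a q.2 * (Real.sqrt (eigs (A q.1) q.2) : ℂ)
  have hsq : ∀ i t, (Real.sqrt (eigs (A i) t) : ℂ) * (Real.sqrt (eigs (A i) t) : ℂ)
      = eigs (A i) t := fun i t => by
    rw [← Complex.ofReal_mul, Real.mul_self_sqrt (eigs_nonneg (hA i) t)]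
  have hV : ∑ i, A i = V * Vᴴ := by
    ext a b
    rw [Matrix.sum_apply, Matrix.mul_apply, Fintype.sum_prod_type]
    refine Finset.sum_congr rfl fun i _ => ?_
    conv_lhs => rw [h3 i, mul_diagonal_mul_conjTranspose_apply]
    refine Finset.sum_congr rfl fun t _ => ?_
    rw [← hsq]
    simp only [V, conjTranspose_apply, of_apply, star_mul', Complex.star_def, Complex.conj_ofReal]
    ring
  have hdiag : ∀ q : ι × n, ((Vᴴ * V) q q).re = eigs (A q.1) q.2 := by
    rintro ⟨i, t⟩
    have : (Vᴴ * V) (i, t) (i, t) = ((eigs (A i) t : ℝ) : ℂ) * ((U i)ᴴ * U i) t t := by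
      rw [Matrix.mul_apply, Matrix.mul_apply, Finset.mul_sum]
      refine Finset.sum_congr rfl fun a _ => ?_
      rw [← hsq]
      simp only [V, conjTranspose_apply, of_apply, star_mul', Complex.star_def,
        Complex.conj_ofReal]
      ring
    rw [this, h1]
    simp
  rw [hV, vnEntropy_mul_conjTranspose]
  refine (vnEntropy_le_diag (posSemidef_conjTranspose_mul_self V)).trans (le_of_eq ?_)
  simp_rw [hdiag]
  rw [Fintype.sum_prod_type]
  rfl

theorem vnEntropy_smul {A : Matrix n n ℂ} (hA : A.IsHermitian) (c : ℝ) :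
    vnEntropy (c • A) = c * vnEntropy A + negMulLogb c * A.trace.re := by
  obtain ⟨U, h1, h2, h3⟩ := exists_spectral hA
  rw [vnEntropy_of_isometry (A := c • A) (d := fun i => c * eigs A i) h1, vnEntropy_eq_sum,
    ← sum_eigs hA, Finset.mul_sum, Finset.mul_sum, ← Finset.sum_add_distrib]
  · refine Finset.sum_congr rfl fun i _ => ?_
    rw [negMulLogb_mul]
    ring
  · conv_lhs => rw [h3]
    ext i j
    rw [Matrix.smul_apply, mul_diagonal_mul_conjTranspose_apply,
      mul_diagonal_mul_conjTranspose_apply, Finset.smul_sum]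
    refine Finset.sum_congr rfl fun t _ => ?_
    simp [mul_assoc]

theorem vnEntropy_kronecker {A : Matrix m m ℂ} {B : Matrix n n ℂ} (hA : A.IsHermitian)
    (hB : B.IsHermitian) :
    vnEntropy (A ⊗ₖ B) = B.trace.re * vnEntropy A + A.trace.re * vnEntropy B := by
  obtain ⟨U, u1, u2, u3⟩ := exists_spectral hA
  obtain ⟨W, w1, w2, w3⟩ := exists_spectral hB
  rw [vnEntropy_of_isometry (A := A ⊗ₖ B) (U := U ⊗ₖ W)
    (d := fun q : m × n => eigs A q.1 * eigs B q.2), Fintype.sum_prod_type, vnEntropy_eq_sum,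
    vnEntropy_eq_sum, ← sum_eigs hA, ← sum_eigs hB]
  · simp_rw [negMulLogb_mul, Finset.sum_add_distrib, ← Finset.sum_mul, ← Finset.mul_sum]
    rw [← Finset.sum_mul]
  · rw [conjTranspose_kronecker, ← mul_kronecker_mul, u1, w1, one_kronecker_one]
  · conv_lhs => rw [u3, w3]
    rw [mul_kronecker_mul, mul_kronecker_mul, conjTranspose_kronecker, diagonal_kronecker_diagonal]
    simp

end Entropy

section Outer

variable {n K X : Type*} [DecidableEq K] [Fintype X]

/-- The classical-quantum operator `∑ x, |e x⟩⟨e x| ⊗ B x`. -/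
def cqMat (e : X → K) (B : X → Matrix n n ℂ) : Matrix (K × n) (K × n) ℂ :=
  ∑ x, outerPr (stdb (e x)) ⊗ₖ B x

theorem cqMat_add (e : X → K) (B C : X → Matrix n n ℂ) :
    cqMat e (fun x => B x + C x) = cqMat e B + cqMat e C := by
  simp [cqMat, kronecker_add, Finset.sum_add_distrib]

variable [Fintype n] [Fintype K]

theorem posSemidef_outerPr (v : n → ℂ) : (outerPr v).PosSemidef := by
  have h : outerPr v = vecMulVec v (star v) := by
    ext i j
    simp [outerPr, vecMulVec_apply]
  rw [h]
  exact posSemidef_vecMulVec_self_star v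

theorem trace_outerPr_stdb (a : K) : (outerPr (stdb a)).trace = 1 := by
  simp [outerPr, stdb, Matrix.trace]

theorem isDensity_outerPr_stdb (a : K) : IsDensity (outerPr (stdb a)) :=
  ⟨posSemidef_outerPr _, trace_outerPr_stdb a⟩

theorem trace_cqMat (e : X → K) (B : X → Matrix n n ℂ) :
    (cqMat e B).trace = ∑ x, (B x).trace := by
  simp [cqMat, trace_sum, trace_kronecker, trace_outerPr_stdb]

theorem posSemidef_cqMat (e : X → K) {B : X → Matrix n n ℂ} (hB : ∀ x, (B x).PosSemidef) :
    (cqMat e B).PosSemidef :=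
  posSemidef_sum _ fun x _ => (posSemidef_outerPr _).kronecker (hB x)

variable [DecidableEq n]

theorem sum_smul_outerPr_stdb (d : n → ℝ) :
    ∑ y, d y • outerPr (stdb y) = diagonal fun y => (d y : ℂ) := by
  ext i j
  rw [Matrix.sum_apply, diagonal_apply]
  rcases eq_or_ne i j with rfl | h
  · simp [outerPr, stdb]
  · rw [if_neg h]
    refine Finset.sum_eq_zero fun y _ => ?_
    by_cases hy : i = y
    · have : j ≠ y := fun hj => h (hy.trans hj.symm)
      simp [outerPr, stdb, this]
    · simp [outerPr, stdb, hy]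

theorem vnEntropy_cqMat {e : X → K} (he : Function.Injective e) {B : X → Matrix n n ℂ}
    (hB : ∀ x, (B x).IsHermitian) : vnEntropy (cqMat e B) = ∑ x, vnEntropy (B x) := by
  classical
  choose U h1 h2 h3 using fun x => exists_spectral (hB x)
  let W : Matrix (K × n) (X × n) ℂ :=
    Matrix.of fun p q => if p.1 = e q.1 then U q.1 p.2 q.2 else 0
  rw [vnEntropy_of_isometry (A := cqMat e B) (U := W) (d := fun q : X × n => eigs (B q.1) q.2),
    Fintype.sum_prod_type]
  · rfl
  · ext ⟨x, s⟩ ⟨y, t⟩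
    rw [Matrix.mul_apply, Fintype.sum_prod_type]
    rcases eq_or_ne x y with rfl | hxy
    · have h := congrFun (congrFun (h1 x) s) t
      rw [Matrix.mul_apply] at h
      simp only [conjTranspose_apply, one_apply] at h
      simpa [W, conjTranspose_apply, one_apply] using h
    · rw [one_apply_ne (by simp [hxy])]
      refine Finset.sum_eq_zero fun a _ => Finset.sum_eq_zero fun b _ => ?_
      by_cases ha : a = e x
      · have : a ≠ e y := fun h => hxy (he (ha.symm.trans h))
        simp [W, this]
      · simp [W, conjTranspose_apply, ha]
  · ext ⟨a, i⟩ ⟨b, j⟩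
    rw [mul_diagonal_mul_conjTranspose_apply, cqMat, Matrix.sum_apply, Fintype.sum_prod_type]
    refine Finset.sum_congr rfl fun x _ => ?_
    rw [kroneckerMap_apply]
    conv_lhs => rw [h3 x, mul_diagonal_mul_conjTranspose_apply, Finset.mul_sum]
    refine Finset.sum_congr rfl fun t _ => ?_
    by_cases ha : a = e x <;> by_cases hb : b = e x <;> simp [W, outerPr, stdb, ha, hb]

/-- Superadditivity of the homogeneous extension of the entropy. -/
theorem le_vnEntropy_add {A B : Matrix n n ℂ} (hA : A.PosSemidef) (hB : B.PosSemidef) :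
    vnEntropy A + vnEntropy B + negMulLogb (A.trace.re + B.trace.re) ≤
      vnEntropy (A + B) + negMulLogb A.trace.re + negMulLogb B.trace.re := by
  have hzero : vnEntropy (0 : Matrix n n ℂ) = 0 := by
    have := vnEntropy_smul (isHermitian_zero : (0 : Matrix n n ℂ).IsHermitian) 0
    simpa [negMulLogb_zero] using this
  have ha0 : 0 ≤ A.trace.re := (Complex.nonneg_iff.mp hA.trace_nonneg).1
  have hb0 : 0 ≤ B.trace.re := (Complex.nonneg_iff.mp hB.trace_nonneg).1
  have hz : ∀ {C : Matrix n n ℂ}, C.PosSemidef → C.trace.re = 0 → C = 0 := by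
    intro C hC h
    refine hC.trace_eq_zero_iff.mp (Complex.ext h ?_)
    exact (Complex.nonneg_iff.mp hC.trace_nonneg).2.symm
  rcases ha0.eq_or_lt with ha | ha
  · rw [hz hA ha.symm]
    simp [hzero, negMulLogb_zero]
  rcases hb0.eq_or_lt with hb | hb
  · rw [hz hB hb.symm]
    simp [hzero, negMulLogb_zero]
  set a := A.trace.re
  set b := B.trace.re
  have hab : 0 < a + b := add_pos ha hb
  have hmix := le_vnEntropy_sum_smul (ι := Bool) (A := fun i => cond i (a⁻¹ • A) (b⁻¹ • B))
    (p := fun i => cond i (a / (a + b)) (b / (a + b)))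
    (by rintro (_ | _)
        · exact hB.smul (inv_nonneg.mpr hb0)
        · exact hA.smul (inv_nonneg.mpr ha0))
    (by rintro (_ | _) <;> simp <;> positivity)
    (by simp; field_simp)
  simp only [Fintype.sum_bool, cond_true, cond_false, smul_smul] at hmix
  have e1 : a / (a + b) * a⁻¹ = (a + b)⁻¹ := by field_simp
  have e2 : b / (a + b) * b⁻¹ = (a + b)⁻¹ := by field_simp
  rw [e1, e2, ← smul_add, vnEntropy_smul (hA.isHermitian.add hB.isHermitian),
    vnEntropy_smul hA.isHermitian, vnEntropy_smul hB.isHermitian, trace_add, Complex.add_re] at hmix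
  have hinv : ∀ c : ℝ, 0 < c → negMulLogb c⁻¹ = - (negMulLogb c / c ^ 2) := by
    intro c hc
    simp only [negMulLogb, Real.logb_inv]
    field_simp
  rw [hinv a ha, hinv b hb, hinv _ hab] at hmix
  have hmul := mul_le_mul_of_nonneg_left hmix hab.le
  have l1 : (a + b) * (a / (a + b) * (a⁻¹ * vnEntropy A + -(negMulLogb a / a ^ 2) * A.trace.re) +
      b / (a + b) * (b⁻¹ * vnEntropy B + -(negMulLogb b / b ^ 2) * B.trace.re)) =
      vnEntropy A - negMulLogb a + (vnEntropy B - negMulLogb b) := by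
    change (a + b) * (a / (a + b) * (a⁻¹ * vnEntropy A + -(negMulLogb a / a ^ 2) * a) +
      b / (a + b) * (b⁻¹ * vnEntropy B + -(negMulLogb b / b ^ 2) * b)) = _
    field_simp
    ring
  have l2 : (a + b) * ((a + b)⁻¹ * vnEntropy (A + B) +
      -(negMulLogb (a + b) / (a + b) ^ 2) * (A.trace.re + B.trace.re)) =
      vnEntropy (A + B) - negMulLogb (a + b) := by
    change (a + b) * ((a + b)⁻¹ * vnEntropy (A + B) +
      -(negMulLogb (a + b) / (a + b) ^ 2) * (a + b)) = _
    field_simp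
    ring
  rw [l1, l2] at hmul
  linarith

theorem vnEntropy_add_le {A B : Matrix n n ℂ} (hA : A.PosSemidef) (hB : B.PosSemidef) :
    vnEntropy (A + B) ≤ vnEntropy A + vnEntropy B := by
  have h := vnEntropy_sum_le (ι := Bool) (A := fun i => cond i A B)
    (by rintro (_ | _) <;> assumption)
  simpa using h

/-- The entropy of a register of `l` bits exceeds that of its side information by at most `l`. -/
theorem sum_vnEntropy_le {l : ℕ} (hX : Fintype.card X = 2 ^ l) {B : X → Matrix n n ℂ}
    (hB : ∀ x, (B x).PosSemidef) :
    ∑ x, vnEntropy (B x) ≤ vnEntropy (∑ x, B x) + l * (∑ x, B x).trace.re := by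
  have h2 : (0 : ℝ) < 2 ^ l := by positivity
  have h := le_vnEntropy_sum_smul hB (p := fun _ => ((2 : ℝ) ^ l)⁻¹)
    (fun _ => by positivity) (by simp [hX])
  rw [← Finset.mul_sum, ← Finset.smul_sum,
    vnEntropy_smul (posSemidef_sum _ fun x _ => hB x).isHermitian] at h
  have he : negMulLogb ((2 : ℝ) ^ l)⁻¹ = ((2 : ℝ) ^ l)⁻¹ * l := by
    simp [negMulLogb, Real.logb_inv, Real.logb_pow]
  rw [he, mul_assoc, ← mul_add] at h
  exact le_of_mul_le_mul_left h (inv_pos.mpr h2)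

/-- Lower bound on the conditional entropy of an almost uniform and independent register. -/
theorem le_sum_vnEntropy_sub {l : ℕ} (hX : Fintype.card X = 2 ^ l)
    {ρ D D' : X → Matrix n n ℂ} (hρ : ∀ x, (ρ x).PosSemidef) (hD : ∀ x, (D x).PosSemidef)
    (hD' : ∀ x, (D' x).PosSemidef) (htr : (∑ x, ρ x).trace = 1)
    (heq : ∀ x, ρ x + D' x = ((2 : ℝ) ^ l)⁻¹ • (∑ x, ρ x) + D x)
    {t : ℝ} (ht : ∑ x, (D x).trace.re = t) :
    l - t * l - negMulLogb t + negMulLogb (1 + t) ≤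
      ∑ x, vnEntropy (ρ x) - vnEntropy (∑ x, ρ x) := by
  classical
  set R := ∑ x, ρ x with hR
  have hRp : R.PosSemidef := posSemidef_sum _ fun x _ => hρ x
  set τ := ((2 : ℝ) ^ l)⁻¹ • R with hτ
  have h2 : (2 : ℝ) ^ l ≠ 0 := by positivity
  have hτp : τ.PosSemidef := hRp.smul (by positivity)
  have hcard : (Fintype.card X : ℝ) = 2 ^ l := by simp [hX]
  have hsτ : ∑ _x : X, τ = R := by
    rw [Finset.sum_const, Finset.card_univ, hX, hτ, ← Nat.cast_smul_eq_nsmul ℝ, smul_smul]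
    simp [h2]
  have hmarg : ∑ x, D' x = ∑ x, D x := by
    have h := Finset.sum_congr (rfl : (Finset.univ : Finset X) = _) fun x _ => heq x
    rw [Finset.sum_add_distrib, Finset.sum_add_distrib, hsτ, ← hR] at h
    exact add_left_cancel h
  have hSτ : ∑ _x : X, vnEntropy τ = vnEntropy R + l := by
    have he : negMulLogb ((2 : ℝ) ^ l)⁻¹ = ((2 : ℝ) ^ l)⁻¹ * l := by
      simp [negMulLogb, Real.logb_inv, Real.logb_pow]
    rw [Finset.sum_const, Finset.card_univ, nsmul_eq_mul, hcard, hτ,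
      vnEntropy_smul hRp.isHermitian, htr, he]
    field_simp
    simp
  have hsub : ∑ x, vnEntropy (τ + D x) ≤ ∑ x, vnEntropy (ρ x) + ∑ x, vnEntropy (D' x) := by
    rw [← Finset.sum_add_distrib]
    refine Finset.sum_le_sum fun x _ => ?_
    rw [← heq x]
    exact vnEntropy_add_le (hρ x) (hD' x)
  have hsuper := le_vnEntropy_add (posSemidef_cqMat (id : X → X) fun _ => hτp)
    (posSemidef_cqMat (id : X → X) hD)
  rw [← cqMat_add, vnEntropy_cqMat Function.injective_id fun _ => hτp.isHermitian,
    vnEntropy_cqMat Function.injective_id fun x => (hD x).isHermitian,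
    vnEntropy_cqMat Function.injective_id fun x => (hτp.add (hD x)).isHermitian,
    trace_cqMat, trace_cqMat, ← trace_sum, hsτ, htr, Complex.re_sum, ht, hSτ,
    Complex.one_re, negMulLogb_one] at hsuper
  have h1 := vnEntropy_sum_le hD
  have h3 := sum_vnEntropy_le hX hD'
  rw [hmarg, trace_sum, Complex.re_sum, ht] at h3
  linarith

/-- A form of Fano's inequality. -/
theorem sum_vnEntropy_sub_le {l : ℕ} (hX : Fintype.card X = 2 ^ l)
    {D O : X → Matrix n n ℂ} (hD : ∀ x, (D x).PosSemidef) (hO : ∀ x, (O x).PosSemidef)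
    (hDent : ∑ x, vnEntropy (D x) = vnEntropy (∑ x, D x)) {t : ℝ}
    (htD : (∑ x, D x).trace.re = 1 - t) (htO : (∑ x, O x).trace.re = t) :
    ∑ x, vnEntropy (D x + O x) - vnEntropy (∑ x, (D x + O x)) ≤
      t * l + negMulLogb t + negMulLogb (1 - t) := by
  have h1 : ∑ x, vnEntropy (D x + O x) ≤ ∑ x, vnEntropy (D x) + ∑ x, vnEntropy (O x) := by
    rw [← Finset.sum_add_distrib]
    exact Finset.sum_le_sum fun x _ => vnEntropy_add_le (hD x) (hO x)
  have h2 := sum_vnEntropy_le hX hO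
  have h3 := le_vnEntropy_add (posSemidef_sum Finset.univ fun x _ => hD x)
    (posSemidef_sum Finset.univ fun x _ => hO x)
  rw [htD, htO, sub_add_cancel, negMulLogb_one] at h3
  rw [htO] at h2
  rw [Finset.sum_add_distrib]
  linarith

/-- Jordan decomposition of a Hermitian matrix. -/
theorem exists_posSemidef_sub {T : Matrix n n ℂ} (hT : T.IsHermitian) :
    ∃ A B : Matrix n n ℂ, A.PosSemidef ∧ B.PosSemidef ∧ T = A - B ∧
      A.trace.re + B.trace.re = ∑ i, |eigs T i| := by
  obtain ⟨U, h1, h2, h3⟩ := exists_spectral hT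
  have hpsd : ∀ d : n → ℝ, (∀ i, 0 ≤ d i) →
      (U * diagonal (fun i => (d i : ℂ)) * Uᴴ).PosSemidef := by
    intro d hd
    refine PosSemidef.mul_mul_conjTranspose_same (PosSemidef.diagonal fun i => ?_) U
    simpa using hd i
  have htr : ∀ d : n → ℝ, (U * diagonal (fun i => (d i : ℂ)) * Uᴴ).trace.re = ∑ i, d i := by
    intro d
    rw [trace_mul_comm, ← Matrix.mul_assoc, h1, Matrix.one_mul, trace_diagonal, Complex.re_sum]
    simp
  refine ⟨_, _, hpsd (fun i => max (eigs T i) 0) (fun i => le_max_right _ _),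
    hpsd (fun i => max (-eigs T i) 0) (fun i => le_max_right _ _), ?_, ?_⟩
  · rw [← Matrix.sub_mul, ← Matrix.mul_sub, diagonal_sub]
    conv_lhs => rw [h3]
    congr 3
    ext i
    rw [← Complex.ofReal_sub]
    congr 1
    rcases le_total 0 (eigs T i) with h | h <;> simp [h]
  · rw [htr, htr, ← Finset.sum_add_distrib]
    refine Finset.sum_congr rfl fun i _ => ?_
    rcases le_total 0 (eigs T i) with h | h <;> simp [h, abs_of_nonneg, abs_of_nonpos]

end Outer

section Mixtures

variable {m n ι X Y E : Type*} [Fintype m] [DecidableEq m] [Fintype n] [DecidableEq n]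
  [Fintype ι] [Fintype X] [Fintype Y] [Fintype E] [DecidableEq E]

theorem IsDensity.kronecker {A : Matrix m m ℂ} {B : Matrix n n ℂ} (hA : IsDensity A)
    (hB : IsDensity B) : IsDensity (A ⊗ₖ B) :=
  ⟨hA.1.kronecker hB.1, by rw [trace_kronecker, hA.2, hB.2, one_mul]⟩

theorem IsDensity.vnEntropy_kronecker {A : Matrix m m ℂ} {B : Matrix n n ℂ} (hA : IsDensity A)
    (hB : IsDensity B) : vnEntropy (A ⊗ₖ B) = vnEntropy A + vnEntropy B := by
  rw [_root_.vnEntropy_kronecker hA.1.isHermitian hB.1.isHermitian, hA.2, hB.2]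
  simp

theorem vnEntropy_mixture_le {A : ι → Matrix n n ℂ} (hA : ∀ i, IsDensity (A i))
    {p : ι → ℝ} (hp : ∀ i, 0 ≤ p i) :
    vnEntropy (∑ i, p i • A i) ≤ ∑ i, p i * vnEntropy (A i) + ∑ i, negMulLogb (p i) := by
  refine (vnEntropy_sum_le fun i => (hA i).1.smul (hp i)).trans (le_of_eq ?_)
  rw [← Finset.sum_add_distrib]
  refine Finset.sum_congr rfl fun i _ => ?_
  rw [vnEntropy_smul (hA i).1.isHermitian, (hA i).2]
  simp

theorem bddAbove_Mmeas [DecidableEq Y] {P : X → Y → ℝ} {σE : X → Y → Matrix E E ℂ}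
    (hP : ∀ x y, 0 ≤ P x y) (hP1 : ∑ x, ∑ y, P x y = 1) (hσ : ∀ x y, IsDensity (σE x y)) :
    BddAbove { r : ℝ | ∃ (dU dV : ℕ) (σU : X → Matrix (Fin dU) (Fin dU) ℂ)
      (σV : X → Matrix (Fin dV) (Fin dV) ℂ),
      (∀ x, IsDensity (σU x)) ∧ (∀ x, IsDensity (σV x)) ∧
      r = (vnEntropy (∑ x, ∑ y, P x y • (σU x ⊗ₖ (σV x ⊗ₖ σE x y)))
            - vnEntropy (∑ x, ∑ y, P x y • (σV x ⊗ₖ σE x y)))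
        - (vnEntropy (∑ x, ∑ y, P x y • (σU x ⊗ₖ (σV x ⊗ₖ outerPr (stdb y))))
            - vnEntropy (∑ x, ∑ y, P x y • (σV x ⊗ₖ outerPr (stdb y)))) } := by
  refine ⟨2 * ∑ q : X × Y, negMulLogb (P q.1 q.2), ?_⟩
  rintro r ⟨dU, dV, σU, σV, hU, hV, rfl⟩
  have hp : ∀ q : X × Y, 0 ≤ P q.1 q.2 := fun q => hP q.1 q.2
  have hp1 : ∑ q : X × Y, P q.1 q.2 = 1 := by rw [Fintype.sum_prod_type, hP1]
  have hY : ∀ y : Y, IsDensity (outerPr (stdb y)) := isDensity_outerPr_stdb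
  have b1 := vnEntropy_mixture_le
    (fun q : X × Y => (hU q.1).kronecker ((hV q.1).kronecker (hσ q.1 q.2))) hp
  have b2 := le_vnEntropy_sum_smul
    (fun q : X × Y => ((hV q.1).kronecker (hσ q.1 q.2)).1) hp hp1
  have b3 := le_vnEntropy_sum_smul
    (fun q : X × Y => ((hU q.1).kronecker ((hV q.1).kronecker (hY q.2))).1) hp hp1
  have b4 := vnEntropy_mixture_le (fun q : X × Y => (hV q.1).kronecker (hY q.2)) hp
  simp only [fun q : X × Y =>
      (hU q.1).vnEntropy_kronecker ((hV q.1).kronecker (hσ q.1 q.2)),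
    fun q : X × Y => (hV q.1).vnEntropy_kronecker (hσ q.1 q.2),
    fun q : X × Y => (hU q.1).vnEntropy_kronecker ((hV q.1).kronecker (hY q.2)),
    fun q : X × Y => (hV q.1).vnEntropy_kronecker (hY q.2),
    mul_add, Finset.sum_add_distrib] at b1 b2 b3 b4
  rw [Fintype.sum_prod_type (fun q : X × Y => P q.1 q.2 • (_ : Matrix _ _ ℂ))] at b1 b2 b3 b4
  linarith

theorem isDensity_one_unit : IsDensity (1 : Matrix (Fin 1) (Fin 1) ℂ) :=
  ⟨PosSemidef.one, by simp⟩

theorem vnEntropy_one_kronecker {B : Matrix n n ℂ} (hB : B.IsHermitian) :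
    vnEntropy ((1 : Matrix (Fin 1) (Fin 1) ℂ) ⊗ₖ B) = vnEntropy B := by
  have h : vnEntropy (1 : Matrix (Fin 1) (Fin 1) ℂ) = 0 := by
    have := vnEntropy_diagonal (fun _ : Fin 1 => (1 : ℝ))
    simpa [negMulLogb_one] using this
  rw [vnEntropy_kronecker isHermitian_one hB, h]
  simp

theorem vnEntropy_copy {K : Type*} [Fintype K] [DecidableEq K] {e : X → K}
    (he : Function.Injective e) {P : X → Y → ℝ} {σ : X → Y → Matrix n n ℂ}
    (hP : ∀ x y, 0 ≤ P x y) (hσ : ∀ x y, (σ x y).PosSemidef) :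
    vnEntropy (∑ x, ∑ y, P x y •
      (outerPr (stdb (e x)) ⊗ₖ ((1 : Matrix (Fin 1) (Fin 1) ℂ) ⊗ₖ σ x y))) =
      ∑ x, vnEntropy (∑ y, P x y • σ x y) := by
  have hH : ∀ x, (∑ y, P x y • σ x y).IsHermitian := fun x =>
    (posSemidef_sum _ fun y _ => (hσ x y).smul (hP x y)).isHermitian
  have h : ∑ x, ∑ y, P x y •
      (outerPr (stdb (e x)) ⊗ₖ ((1 : Matrix (Fin 1) (Fin 1) ℂ) ⊗ₖ σ x y)) =
      cqMat e fun x => (1 : Matrix (Fin 1) (Fin 1) ℂ) ⊗ₖ ∑ y, P x y • σ x y := by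
    ext ⟨a, c, i⟩ ⟨b, d, j⟩
    simp only [cqMat, Matrix.sum_apply, kroneckerMap_apply, Matrix.smul_apply, Finset.mul_sum,
      mul_smul_comm]
  rw [h, vnEntropy_cqMat he]
  · exact Finset.sum_congr rfl fun x _ => vnEntropy_one_kronecker (hH x)
  · intro x
    rw [IsHermitian, conjTranspose_kronecker, conjTranspose_one, (hH x).eq]

theorem vnEntropy_sum_one_kronecker {P : X → Y → ℝ} {σ : X → Y → Matrix n n ℂ}
    (hP : ∀ x y, 0 ≤ P x y) (hσ : ∀ x y, (σ x y).PosSemidef) :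
    vnEntropy (∑ x, ∑ y, P x y • ((1 : Matrix (Fin 1) (Fin 1) ℂ) ⊗ₖ σ x y)) =
      vnEntropy (∑ x, ∑ y, P x y • σ x y) := by
  rw [← vnEntropy_one_kronecker (posSemidef_sum _ fun x _ =>
    posSemidef_sum _ fun y _ => (hσ x y).smul (hP x y)).isHermitian]
  congr 1
  ext ⟨c, i⟩ ⟨d, j⟩
  simp only [Matrix.sum_apply, kroneckerMap_apply, Matrix.smul_apply, Finset.mul_sum,
      mul_smul_comm]

/-- Taking `U` to be a copy of `X` and `V` trivial bounds `M` from below. -/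
theorem le_Mmeas [DecidableEq Y] {P : X → Y → ℝ} {σE : X → Y → Matrix E E ℂ}
    (hP : ∀ x y, 0 ≤ P x y) (hP1 : ∑ x, ∑ y, P x y = 1) (hσ : ∀ x y, IsDensity (σE x y)) :
    (∑ x, vnEntropy (∑ y, P x y • σE x y) - vnEntropy (∑ x, ∑ y, P x y • σE x y)) -
      (∑ x, vnEntropy (diagonal fun y => (P x y : ℂ)) -
        vnEntropy (∑ x, diagonal fun y => (P x y : ℂ))) ≤ Mmeas P σE := by
  refine le_csSup (bddAbove_Mmeas hP hP1 hσ) ⟨Fintype.card X, 1,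
    fun x => outerPr (stdb (Fintype.equivFin X x)), fun _ => 1,
    fun x => isDensity_outerPr_stdb _, fun _ => isDensity_one_unit, ?_⟩
  have hσ' := fun x y => (hσ x y).1
  have hY : ∀ (x : X) (y : Y), (outerPr (stdb y)).PosSemidef :=
    fun _ y => posSemidef_outerPr (stdb y)
  rw [vnEntropy_copy (Fintype.equivFin X).injective hP hσ',
    vnEntropy_copy (Fintype.equivFin X).injective hP hY,
    vnEntropy_sum_one_kronecker hP hσ', vnEntropy_sum_one_kronecker hP hY]
  simp_rw [sum_smul_outerPr_stdb]

end Mixtures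

section Security

variable {X Y E : Type*}

/-- The diagonal block of an operator on `X × Y × E` at classical values `x`, `y`. -/
def diagBlock (M : Matrix (X × Y × E) (X × Y × E) ℂ) (x : X) (y : Y) :
    Matrix E E ℂ :=
  M.submatrix (fun e => (x, y, e)) fun e => (x, y, e)

theorem sum_trace_diagBlock [Fintype X] [Fintype Y] [Fintype E]
    (M : Matrix (X × Y × E) (X × Y × E) ℂ) :
    ∑ x, ∑ y, (diagBlock M x y).trace = M.trace := by
  simp [Matrix.trace, diagBlock, Fintype.sum_prod_type]

variable [Fintype X] [DecidableEq X]

theorem diagBlock_real {P : X → X → ℝ} {σ : X → X → Matrix E E ℂ} (x y : X) :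
    diagBlock (∑ a, ∑ b, P a b • (outerPr (stdb a) ⊗ₖ (outerPr (stdb b) ⊗ₖ σ a b))) x y =
      P x y • σ x y := by
  ext i j
  simp [diagBlock, Matrix.sum_apply, outerPr, stdb]

theorem diagBlock_ideal (c : ℝ) (R : Matrix E E ℂ) (x y : X) :
    diagBlock (∑ s, c • (outerPr (stdb s) ⊗ₖ (outerPr (stdb s) ⊗ₖ R))) x y =
      if x = y then c • R else 0 := by
  ext i j
  by_cases h : x = y
  · subst h
    simp [diagBlock, Matrix.sum_apply, outerPr, stdb]
  · simp [diagBlock, Matrix.sum_apply, outerPr, stdb, h]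

variable [Fintype E] [DecidableEq E]

/-- The consequences of security used below: positive operators witnessing the distance from
uniform, and the error probability bound. -/
theorem exists_witness_of_traceDist_le {l : ℕ} (hX : Fintype.card X = 2 ^ l) {ε : ℝ}
    {P : X → X → ℝ} (hP : ∀ x y, 0 ≤ P x y) (hP1 : ∑ x, ∑ y, P x y = 1)
    {σ : X → X → Matrix E E ℂ} (hσ : ∀ x y, IsDensity (σ x y))
    (h : traceDist
      (∑ a, ∑ b, P a b • (outerPr (stdb a) ⊗ₖ (outerPr (stdb b) ⊗ₖ σ a b)))
      (∑ s : X, ((2 : ℝ) ^ l)⁻¹ •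
        (outerPr (stdb s) ⊗ₖ (outerPr (stdb s) ⊗ₖ (∑ a, ∑ b, P a b • σ a b)))) ≤ ε) :
    (∃ D D' : X → Matrix E E ℂ, (∀ x, (D x).PosSemidef) ∧ (∀ x, (D' x).PosSemidef) ∧
      (∀ x, ∑ y, P x y • σ x y + D' x =
        ((2 : ℝ) ^ l)⁻¹ • (∑ x, ∑ y, P x y • σ x y) + D x) ∧
      ∑ x, (D x).trace.re ≤ ε) ∧
    ∑ x, ∑ y, (if x = y then 0 else P x y) ≤ ε := by
  set R := ∑ a, ∑ b, P a b • σ a b with hR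
  set ρ := ∑ a, ∑ b, P a b • (outerPr (stdb a) ⊗ₖ (outerPr (stdb b) ⊗ₖ σ a b)) with hρ
  set ω := ∑ s : X, ((2 : ℝ) ^ l)⁻¹ • (outerPr (stdb s) ⊗ₖ (outerPr (stdb s) ⊗ₖ R)) with hω
  have hRp : R.PosSemidef := posSemidef_sum _ fun x _ =>
    posSemidef_sum _ fun y _ => (hσ x y).1.smul (hP x y)
  have hRt : R.trace = 1 := by
    have : R.trace = ((∑ x, ∑ y, P x y : ℝ) : ℂ) := by
      simp [hR, trace_sum, trace_smul, (hσ _ _).2]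
    rw [this, hP1, Complex.ofReal_one]
  have hρp : ρ.PosSemidef := posSemidef_sum _ fun x _ => posSemidef_sum _ fun y _ =>
    ((posSemidef_outerPr _).kronecker
      ((posSemidef_outerPr _).kronecker (hσ x y).1)).smul (hP x y)
  have hωp : ω.PosSemidef := posSemidef_sum _ fun x _ =>
    ((posSemidef_outerPr _).kronecker ((posSemidef_outerPr _).kronecker hRp)).smul (by positivity)
  have hρt : ρ.trace = 1 := by
    rw [← sum_trace_diagBlock]
    simp_rw [hρ, diagBlock_real, ← trace_sum]
    exact hRt
  have hωt : ω.trace = 1 := by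
    rw [← sum_trace_diagBlock]
    simp_rw [hω, diagBlock_ideal]
    simp [apply_ite Matrix.trace, hRt, hX]
  obtain ⟨A, B, hA, hB, hAB, htr⟩ := exists_posSemidef_sub (hρp.isHermitian.sub hωp.isHermitian)
  have hAt : A.trace.re = B.trace.re := by
    have := congrArg (fun M => (Matrix.trace M).re) hAB
    simp only [trace_sub, hρt, hωt, sub_self, Complex.zero_re, Complex.sub_re] at this
    linarith
  have hAε : A.trace.re ≤ ε := by
    rw [traceDist, ← htr, ← hAt] at h
    linarith
  have hAb : ∀ x y, (diagBlock A x y).PosSemidef := fun x y => hA.submatrix _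
  have hBb : ∀ x y, (diagBlock B x y).PosSemidef := fun x y => hB.submatrix _
  have hblock : ∀ x y, P x y • σ x y + diagBlock B x y =
      (if x = y then ((2 : ℝ) ^ l)⁻¹ • R else 0) + diagBlock A x y := by
    intro x y
    rw [← diagBlock_real (P := P) (σ := σ) x y, ← diagBlock_ideal ((2 : ℝ) ^ l)⁻¹ R x y,
      ← hρ, ← hω]
    have : ρ + B = ω + A := by
      rw [sub_eq_sub_iff_add_eq_add] at hAB
      rw [hAB, add_comm]
    exact congrArg (fun M => diagBlock M x y) this
  have hre : ∀ {C : Matrix E E ℂ}, C.PosSemidef → 0 ≤ C.trace.re := fun hC =>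
    (Complex.nonneg_iff.mp hC.trace_nonneg).1
  have hAsum : ∑ x, ∑ y, (diagBlock A x y).trace.re = A.trace.re := by
    rw [← sum_trace_diagBlock A]
    simp [Complex.re_sum]
  refine ⟨⟨fun x => ∑ y, diagBlock A x y, fun x => ∑ y, diagBlock B x y,
    fun x => posSemidef_sum _ fun y _ => hAb x y, fun x => posSemidef_sum _ fun y _ => hBb x y,
    ?_, ?_⟩, ?_⟩
  · intro x
    rw [← Finset.sum_add_distrib, Finset.sum_congr rfl fun y _ => hblock x y,
      Finset.sum_add_distrib]
    simp
  · refine le_trans (le_of_eq ?_) hAε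
    rw [← hAsum]
    simp [trace_sum]
  · refine le_trans ?_ hAε
    rw [← hAsum]
    refine Finset.sum_le_sum fun x _ => Finset.sum_le_sum fun y _ => ?_
    split_ifs with hxy
    · exact hre (hAb x y)
    · have h1 := congrArg (fun M => (Matrix.trace M).re) (hblock x y)
      simp only [hxy, if_false, zero_add, trace_add, trace_smul, (hσ x y).2, Complex.add_re] at h1
      have h2 := hre (hBb x y)
      have h3 : (P x y • (1 : ℂ)).re = P x y := by simp
      linarith

end Security

theorem binEnt_eq (ε : ℝ) : binEnt ε = negMulLogb ε + negMulLogb (1 - ε) := by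
  simp only [binEnt, negMulLogb]
  ring

theorem binEnt_eq_binEntropy (ε : ℝ) : binEnt ε = (Real.log 2)⁻¹ * Real.binEntropy ε := by
  rw [binEnt_eq, Real.binEntropy_eq_negMulLog_add_negMulLog_one_sub, negMulLogb_eq, negMulLogb_eq]
  ring

theorem binEnt_mono {s t : ℝ} (hs : 0 ≤ s) (hst : s ≤ t) (ht : t ≤ 1 / 2) :
    binEnt s ≤ binEnt t := by
  rw [binEnt_eq_binEntropy, binEnt_eq_binEntropy]
  refine mul_le_mul_of_nonneg_left ?_ (by positivity)
  exact Real.binEntropy_strictMonoOn.monotoneOn ⟨hs, by linarith⟩ ⟨by linarith, by linarith⟩ hst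

theorem binEnt_nonneg {s : ℝ} (hs : 0 ≤ s) (hs' : s ≤ 1 / 2) : 0 ≤ binEnt s := by
  rw [binEnt_eq_binEntropy]
  exact mul_nonneg (by positivity) (Real.binEntropy_nonneg hs (by linarith))

theorem negMulLogb_sub_le {t : ℝ} (h0 : 0 ≤ t) (h1 : t ≤ 1 / 2) :
    negMulLogb t - negMulLogb (1 + t) ≤ binEnt t + 3 * t ^ 2 := by
  have hlog : 0.6931471803 < Real.log 2 := Real.log_two_gt_d9
  have ha : Real.log (1 + t) ≤ t := by
    have := Real.log_le_sub_one_of_pos (show (0 : ℝ) < 1 + t by linarith)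
    linarith
  have hb : Real.log (1 - t) ≤ -t := by
    have := Real.log_le_sub_one_of_pos (show (0 : ℝ) < 1 - t by linarith)
    linarith
  have hc : (1 + t) * Real.log (1 + t) + (1 - t) * Real.log (1 - t) ≤ 2 * t ^ 2 := by nlinarith
  have hd : -negMulLogb (1 + t) - negMulLogb (1 - t) =
      ((1 + t) * Real.log (1 + t) + (1 - t) * Real.log (1 - t)) / Real.log 2 := by
    simp only [negMulLogb, Real.logb]
    ring
  have he : ((1 + t) * Real.log (1 + t) + (1 - t) * Real.log (1 - t)) / Real.log 2 ≤
      3 * t ^ 2 := by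
    rw [div_le_iff₀ (by linarith)]
    nlinarith [sq_nonneg t]
  rw [binEnt_eq]
  linarith

/-- for an ε-secure key pair `(S_A, S_B)` of length `ℓ` with adversary
system `E`, `M(S_A;S_B;E) ≥ (1 - ε - 2h(ε) - √(2ε))·ℓ - 1/e`. -/
theorem M_lower_bound_of_secure_key
    {l dE : ℕ} (hl : 1 ≤ l) (ε : ℝ) (hε0 : 0 ≤ ε) (hε : ε ≤ 1 / 2)
    (P : (Fin l → Bool) → (Fin l → Bool) → ℝ)
    (hP0 : ∀ a b, 0 ≤ P a b) (hP1 : ∑ a, ∑ b, P a b = 1)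
    (ρE : (Fin l → Bool) → (Fin l → Bool) → Matrix (Fin dE) (Fin dE) ℂ)
    (hρE : ∀ a b, IsDensity (ρE a b))
    (hsecure : traceDist
      (∑ a, ∑ b, P a b • (outerPr (stdb a) ⊗ₖ (outerPr (stdb b) ⊗ₖ ρE a b)))
      (∑ s : Fin l → Bool, ((2 : ℝ) ^ l)⁻¹ •
        (outerPr (stdb s) ⊗ₖ (outerPr (stdb s) ⊗ₖ (∑ a, ∑ b, P a b • ρE a b)))) ≤ ε) :
    Mmeas P ρE ≥ (1 - ε - 2 * binEnt ε - Real.sqrt (2 * ε)) * l - 1 / Real.exp 1 := by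
  have hX : Fintype.card (Fin l → Bool) = 2 ^ l := by simp
  obtain ⟨⟨D, D', hD, hD', heq, hDt⟩, herr⟩ :=
    exists_witness_of_traceDist_le hX hP0 hP1 hρE hsecure
  have hE := le_sum_vnEntropy_sub hX (ρ := fun x => ∑ y, P x y • ρE x y)
    (fun x => posSemidef_sum _ fun y _ => (hρE x y).1.smul (hP0 x y)) hD hD'
    (by
      have : (∑ x, ∑ y, P x y • ρE x y).trace = ((∑ x, ∑ y, P x y : ℝ) : ℂ) := by
        simp [trace_sum, trace_smul, (hρE _ _).2]
      rw [this, hP1, Complex.ofReal_one]) heq rfl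
  have hre : ∀ x, 0 ≤ (D x).trace.re := fun x => (Complex.nonneg_iff.mp (hD x).trace_nonneg).1
  have ht0 : 0 ≤ ∑ x, (D x).trace.re := Finset.sum_nonneg fun x _ => hre x
  set t := ∑ x, (D x).trace.re
  set δ := ∑ x, ∑ y, (if x = y then 0 else P x y) with hδ
  have hδ0 : 0 ≤ δ := Finset.sum_nonneg fun x _ => Finset.sum_nonneg fun y _ => by
    split_ifs
    exacts [le_rfl, hP0 x y]
  have hdiag : ∑ x, P x x = 1 - δ := by
    have : ∑ x, P x x + δ = 1 := by
      rw [hδ, ← Finset.sum_add_distrib, ← hP1]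
      refine Finset.sum_congr rfl fun x _ => ?_
      rw [← Finset.add_sum_erase _ _ (Finset.mem_univ x),
        ← Finset.add_sum_erase _ (P x) (Finset.mem_univ x)]
      simp only [if_true, zero_add]
      congr 1
      exact Finset.sum_congr rfl fun y hy => if_neg (Finset.ne_of_mem_erase hy).symm
    linarith
  have hdp : ∀ d : (Fin l → Bool) → ℝ, (∀ y, 0 ≤ d y) →
      (diagonal fun y => (d y : ℂ)).PosSemidef := fun d hd =>
    PosSemidef.diagonal fun y => by simpa using hd y
  have hY := sum_vnEntropy_sub_le hX (t := δ)
    (D := fun x => diagonal fun y => ((if x = y then P x y else 0 : ℝ) : ℂ))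
    (O := fun x => diagonal fun y => ((if x = y then 0 else P x y : ℝ) : ℂ))
    (fun x => hdp _ fun y => by split_ifs; exacts [hP0 x y, le_rfl])
    (fun x => hdp _ fun y => by split_ifs; exacts [le_rfl, hP0 x y])
    (by
      have hsum : ∑ x, (diagonal fun y => ((if x = y then P x y else 0 : ℝ) : ℂ)) =
          diagonal fun y => (P y y : ℂ) := by
        ext i j
        rw [Matrix.sum_apply]
        by_cases h : i = j
        · simp [h, apply_ite Complex.ofReal]
        · simp [h]
      rw [hsum, vnEntropy_diagonal]
      refine Finset.sum_congr rfl fun x _ => ?_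
      rw [vnEntropy_diagonal]
      simp [apply_ite negMulLogb, negMulLogb_zero])
    (by simp [trace_sum, hdiag])
    (by
      rw [trace_sum, Complex.re_sum]
      simp only [trace_diagonal, Complex.re_sum, Complex.ofReal_re]
      rfl)
  have hsplit : ∀ x, (diagonal fun y => ((if x = y then P x y else 0 : ℝ) : ℂ)) +
      (diagonal fun y => ((if x = y then 0 else P x y : ℝ) : ℂ)) =
      diagonal fun y => (P x y : ℂ) := by
    intro x
    rw [diagonal_add]
    congr 1
    funext y
    split_ifs <;> simp
  simp only [hsplit] at hY
  have hM := le_Mmeas hP0 hP1 hρE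
  have hl1 : (1 : ℝ) ≤ l := by exact_mod_cast hl
  have hb1 := negMulLogb_sub_le ht0 (hDt.trans hε)
  have hb2 := binEnt_mono ht0 hDt hε
  have hb3 := binEnt_mono hδ0 herr hε
  rw [binEnt_eq δ] at hb3
  have hb4 := binEnt_nonneg hε0 hε
  have hsq : 2 * ε ≤ Real.sqrt (2 * ε) := Real.le_sqrt_of_sq_le (by nlinarith)
  have he : (1 : ℝ) / 4 ≤ 1 / Real.exp 1 := by
    have := Real.exp_one_lt_d9
    exact one_div_le_one_div_of_le (Real.exp_pos 1) (by linarith)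
  have hq : 3 * t ^ 2 ≤ ε + 1 / 4 := by nlinarith
  have m1 : 2 * ε * l ≤ Real.sqrt (2 * ε) * l := mul_le_mul_of_nonneg_right hsq (by linarith)
  have m2 : binEnt ε ≤ binEnt ε * l := le_mul_of_one_le_right hb4 hl1
  have m3 : t * l ≤ ε * l := mul_le_mul_of_nonneg_right hDt (by linarith)
  have m4 : δ * l ≤ ε * l := mul_le_mul_of_nonneg_right herr (by linarith)
  have m5 : ε ≤ ε * l := le_mul_of_one_le_right hε0 hl1
  nlinarith
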